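/- arXiv:alg-geom/9503019 — 5 statements merged into one kernel-verified Lean document; each statement's English description precedes it below -/
import Mathlib

section
/- Let Γ be a stable graph with at most m whole edges, let Δ₁ and Δ₂ be full subgraphs of Γ, and let Δ be the full subgraph on the vertex set V(Δ₁) ∪ V(Δ₂). Then g(Δ) ≤ g(Δ₁) + g(Δ₂) + m. -/
/-- A stable (weighted) graph: a finite nonempty vertex set `V` with weights `w`,
a finite set `H` of half edges with attachment map `a` and an involution `ι`.
Fixed points of `ι` are the loose half edges; 2-element orbits are the whole edges.
The graph is connected with respect to its whole edges and satisfies the stability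
condition. -/
structure StableGraph where
  V : Type
  [instFintypeV : Fintype V]
  [instDecEqV : DecidableEq V]
  w : V → ℕ
  H : Type
  [instFintypeH : Fintype H]
  [instDecEqH : DecidableEq H]
  a : H → V
  ι : H → H
  invol : ∀ x, ι (ι x) = x
  conn : (SimpleGraph.fromRel fun u v : V =>
    ∃ x, ι x ≠ x ∧ a x = u ∧ a (ι x) = v).Connected
  stable_zero : ∀ v, w v = 0 → 3 ≤ (Finset.univ.filter fun x => a x = v).card
  stable_one : ∀ v, w v = 1 → 1 ≤ (Finset.univ.filter fun x => a x = v).card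

attribute [instance] StableGraph.instFintypeV StableGraph.instDecEqV
  StableGraph.instFintypeH StableGraph.instDecEqH

namespace StableGraph

variable (Γ : StableGraph)

/-- The number of loose half edges (marked points). -/
def looseCount : ℕ := (Finset.univ.filter fun x : Γ.H => Γ.ι x = x).card

/-- The half edges of whole edges of the full subgraph on the vertex set `S`,
i.e. the half edges `x` of whole edges both of whose endpoints lie in `S`. -/
def edgeFinset (S : Finset Γ.V) : Finset Γ.H :=
  Finset.univ.filter fun x : Γ.H => Γ.ι x ≠ x ∧ Γ.a x ∈ S ∧ Γ.a (Γ.ι x) ∈ S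

/-- The number of whole edges of the full subgraph on `S`. -/
def edgeCount (S : Finset Γ.V) : ℕ := (Γ.edgeFinset S).card / 2

/-- The simple graph underlying the full subgraph on `S` (loops and multiple
edges collapsed; this suffices for connectivity notions). -/
def subGraphOn (S : Finset Γ.V) : SimpleGraph {v : Γ.V // v ∈ S} :=
  SimpleGraph.fromRel fun u v => ∃ x, Γ.ι x ≠ x ∧ Γ.a x = u.1 ∧ Γ.a (Γ.ι x) = v.1

/-- The number of connected components of the full subgraph on `S`. -/
noncomputable def numComponents (S : Finset Γ.V) : ℕ :=
  Nat.card (Γ.subGraphOn S).ConnectedComponent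

/-- The genus of the full subgraph on `S`: its first Betti number
(#whole edges − #vertices + #components) plus the sum of the weights. -/
noncomputable def subGenus (S : Finset Γ.V) : ℤ :=
  (Γ.edgeCount S : ℤ) - S.card + Γ.numComponents S + ∑ v ∈ S, (Γ.w v : ℤ)

/-- The genus of a stable graph: `b₁ + Σ w` with
`b₁ = #whole edges − #vertices + 1`. -/
noncomputable def genus : ℤ :=
  (Γ.edgeCount Finset.univ : ℤ) - Fintype.card Γ.V + 1 + ∑ v : Γ.V, (Γ.w v : ℤ)

/-- Membership in `𝒢_k(g,n)`: genus `g`, exactly `n` loose half edges, and at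
most `⌊k/2⌋ + 1` whole edges. -/
def memG (k g n : ℕ) : Prop :=
  Γ.genus = g ∧ Γ.looseCount = n ∧ Γ.edgeCount Finset.univ ≤ k / 2 + 1

/-- The full subgraph on `S` is `Φ`-weak if `g(S) ≤ Φ(v(Γ) − v(S))`. -/
def IsWeak (Φ : ℕ → ℝ) (S : Finset Γ.V) : Prop :=
  (Γ.subGenus S : ℝ) ≤ Φ (Fintype.card Γ.V - S.card)

open Classical in
/-- The vertex set of the maximal `Φ`-weak subgraph `Γ_W`: the union of the
vertex sets of all `Φ`-weak full subgraphs of `Γ`. -/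
noncomputable def weakCore (Φ : ℕ → ℝ) : Finset Γ.V :=
  Finset.univ.filter fun v => ∃ S : Finset Γ.V, Γ.IsWeak Φ S ∧ v ∈ S

end StableGraph

/-!
Write `g(Δ) = b₁(Δ) + w(Δ)`, with `b₁` the first Betti number and `w` the total weight. A connected
graph on `n` vertices has at least `n - 1` edges, and summing over components gives `0 ≤ b₁(Δ)`;
each component has a vertex, so `b₁(Δ)` is at most the number of whole edges of `Δ`. As the total
weight is subadditive under unions of vertex sets, `g(Δ)` exceeds `g(Δ₁) + g(Δ₂)` by at most the
number of whole edges of `Δ`.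
-/

section SimpleGraph

variable {V : Type*} (G : SimpleGraph V)

theorem injective_sigma_connectedComponent_mapEdgeSet :
    Function.Injective fun x : Σ c : G.ConnectedComponent, c.toSimpleGraph.edgeSet =>
      x.1.toSimpleGraph_hom.mapEdgeSet x.2 := by
  rintro ⟨c, e⟩ ⟨d, f⟩ (h : c.toSimpleGraph_hom.mapEdgeSet e = d.toSimpleGraph_hom.mapEdgeSet f)
  obtain rfl : c = d := by
    have map_eq : Sym2.map c.toSimpleGraph_hom e.1 = Sym2.map d.toSimpleGraph_hom f.1 :=
      congrArg Subtype.val h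
    obtain ⟨u, hu⟩ : ∃ u, u ∈ e.1 := ⟨_, Sym2.out_fst_mem e.1⟩
    obtain ⟨v, -, hvu⟩ : ∃ v ∈ f.1, d.toSimpleGraph_hom v = c.toSimpleGraph_hom u :=
      Sym2.mem_map.1 (map_eq ▸ Sym2.mem_map.2 ⟨u, hu, rfl⟩)
    calc c = G.connectedComponentMk u := u.2.symm
      _ = G.connectedComponentMk v := congrArg _ hvu.symm
      _ = d := v.2
  exact congrArg _ (SimpleGraph.Hom.mapEdgeSet.injective _ Subtype.val_injective h)

theorem card_le_card_edgeSet_add_card_connectedComponent [Finite V] :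
    Nat.card V ≤ Nat.card G.edgeSet + Nat.card G.ConnectedComponent := by
  have := Fintype.ofFinite G.ConnectedComponent
  calc Nat.card V
      = ∑ c : G.ConnectedComponent, Nat.card c := by
        rw [← Nat.card_sigma]
        exact Nat.card_congr (Equiv.sigmaFiberEquiv G.connectedComponentMk).symm
    _ ≤ ∑ c : G.ConnectedComponent, (Nat.card c.toSimpleGraph.edgeSet + 1) :=
        Finset.sum_le_sum fun c _ => c.connected_toSimpleGraph.card_vert_le_card_edgeSet_add_one
    _ = Nat.card (Σ c : G.ConnectedComponent, c.toSimpleGraph.edgeSet)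
          + Nat.card G.ConnectedComponent := by
        rw [Finset.sum_add_distrib, ← Nat.card_sigma, Finset.sum_const, smul_eq_mul, mul_one,
          Finset.card_univ, Nat.card_eq_fintype_card (α := G.ConnectedComponent)]
    _ ≤ Nat.card G.edgeSet + Nat.card G.ConnectedComponent := by
        gcongr
        exact Nat.card_le_card_of_injective _ (injective_sigma_connectedComponent_mapEdgeSet G)

end SimpleGraph

namespace StableGraph

variable (Γ : StableGraph) {S T : Finset Γ.V}

theorem mem_edgeFinset {x : Γ.H} :
    x ∈ Γ.edgeFinset S ↔ Γ.ι x ≠ x ∧ Γ.a x ∈ S ∧ Γ.a (Γ.ι x) ∈ S := by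
  simp only [edgeFinset, Finset.mem_filter, Finset.mem_univ, true_and]

theorem edgeCount_mono (h : S ⊆ T) : Γ.edgeCount S ≤ Γ.edgeCount T := by
  refine Nat.div_le_div_right (Finset.card_le_card fun x hx => ?_)
  obtain ⟨hne, ha, hι⟩ := Γ.mem_edgeFinset.1 hx
  exact Γ.mem_edgeFinset.2 ⟨hne, h ha, h hι⟩

theorem exists_mem_edgeFinset_of_adj {u v : {v // v ∈ S}} (h : (Γ.subGraphOn S).Adj u v) :
    ∃ x ∈ Γ.edgeFinset S, Γ.a x = u ∧ Γ.a (Γ.ι x) = v := by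
  obtain ⟨-, ⟨x, hne, hu, hv⟩ | ⟨x, hne, hv, hu⟩⟩ := (SimpleGraph.fromRel_adj _ _ _).1 h
  · exact ⟨x, Γ.mem_edgeFinset.2 ⟨hne, hu ▸ u.2, hv ▸ v.2⟩, hu, hv⟩
  · refine ⟨Γ.ι x, Γ.mem_edgeFinset.2 ?_, hu, ?_⟩ <;> rw [Γ.invol]
    exacts [⟨hne.symm, hu ▸ u.2, hv ▸ v.2⟩, hv]

variable (S)

theorem card_edgeSet_subGraphOn_le_edgeCount :
    Nat.card (Γ.subGraphOn S).edgeSet ≤ Γ.edgeCount S := by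
  classical
  choose halfEdge halfEdge_mem a_halfEdge a_ι_halfEdge using
    fun d : (Γ.subGraphOn S).Dart => Γ.exists_mem_edgeFinset_of_adj d.adj
  have halfEdge_injective : Function.Injective halfEdge := fun d e h =>
    SimpleGraph.Dart.ext _ _ <| Prod.ext
      (Subtype.ext <| by rw [← a_halfEdge, h, a_halfEdge])
      (Subtype.ext <| by rw [← a_ι_halfEdge, h, a_ι_halfEdge])
  rw [edgeCount, Nat.le_div_iff_mul_le two_pos, mul_comm, Nat.card_eq_fintype_card,
    SimpleGraph.card_edgeSet, ← SimpleGraph.dart_card_eq_twice_card_edges, ← Finset.card_univ]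
  exact Finset.card_le_card_of_injOn halfEdge (fun d _ => halfEdge_mem d)
    halfEdge_injective.injOn

theorem numComponents_le_card : Γ.numComponents S ≤ S.card := by
  rw [← Nat.card_eq_finsetCard]
  exact Nat.card_le_card_of_surjective _ Quot.mk_surjective

theorem card_le_edgeCount_add_numComponents :
    S.card ≤ Γ.edgeCount S + Γ.numComponents S := by
  rw [← Nat.card_eq_finsetCard]
  exact (card_le_card_edgeSet_add_card_connectedComponent (Γ.subGraphOn S)).trans <|
    Nat.add_le_add_right (Γ.card_edgeSet_subGraphOn_le_edgeCount S) _

/-- The first Betti number of the full subgraph on `S`, i.e. its genus without the vertex weights.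
It takes values in `ℤ`, so that no subtraction is truncated. -/
noncomputable def firstBetti : ℤ :=
  (Γ.edgeCount S : ℤ) - S.card + Γ.numComponents S

theorem subGenus_eq_firstBetti_add_sum_weight :
    Γ.subGenus S = Γ.firstBetti S + ∑ v ∈ S, (Γ.w v : ℤ) :=
  rfl

theorem firstBetti_nonneg : 0 ≤ Γ.firstBetti S := by
  have := Γ.card_le_edgeCount_add_numComponents S
  unfold firstBetti
  omega

theorem firstBetti_le_edgeCount : Γ.firstBetti S ≤ Γ.edgeCount S := by
  have := Γ.numComponents_le_card S
  unfold firstBetti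
  omega

theorem sum_weight_union_le (S₁ S₂ : Finset Γ.V) :
    ∑ v ∈ S₁ ∪ S₂, (Γ.w v : ℤ) ≤ ∑ v ∈ S₁, (Γ.w v : ℤ) + ∑ v ∈ S₂, (Γ.w v : ℤ) := by
  rw [← Finset.sum_union_inter]
  exact le_add_of_nonneg_right (Finset.sum_nonneg fun v _ => Int.natCast_nonneg (Γ.w v))

theorem subGenus_union_le_add_edgeCount (S₁ S₂ : Finset Γ.V) :
    Γ.subGenus (S₁ ∪ S₂) ≤ Γ.subGenus S₁ + Γ.subGenus S₂ + Γ.edgeCount (S₁ ∪ S₂) := by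
  simp only [subGenus_eq_firstBetti_add_sum_weight]
  linarith [Γ.firstBetti_le_edgeCount (S₁ ∪ S₂), Γ.firstBetti_nonneg S₁, Γ.firstBetti_nonneg S₂,
    Γ.sum_weight_union_le S₁ S₂]

end StableGraph

open StableGraph in
/-- If `Γ` is a stable graph with at most `m` whole edges and
`Δ₁`, `Δ₂` are full subgraphs of `Γ` on vertex sets `S₁`, `S₂`, then the full
subgraph `Δ` on `S₁ ∪ S₂` satisfies `g(Δ) ≤ g(Δ₁) + g(Δ₂) + m`. -/
theorem subGenus_union_le (Γ : StableGraph) (m : ℕ)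
    (hm : Γ.edgeCount Finset.univ ≤ m) (S₁ S₂ : Finset Γ.V) :
    Γ.subGenus (S₁ ∪ S₂) ≤ Γ.subGenus S₁ + Γ.subGenus S₂ + m := by
  have edgeCount_le : Γ.edgeCount (S₁ ∪ S₂) ≤ m :=
    (Γ.edgeCount_mono (Finset.subset_univ _)).trans hm
  calc Γ.subGenus (S₁ ∪ S₂)
      ≤ Γ.subGenus S₁ + Γ.subGenus S₂ + Γ.edgeCount (S₁ ∪ S₂) :=
        Γ.subGenus_union_le_add_edgeCount S₁ S₂
    _ ≤ Γ.subGenus S₁ + Γ.subGenus S₂ + m := by gcongr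
end

section
/- Let k ≥ 0 be an integer and set l := ⌊k/2⌋ + 1, α := (2l+1)/l and β := l²·α^{l+1}, and define Φ_k : ℕ → ℝ by Φ_k(n) := α^{−n}·β. Then for every integer n with 1 ≤ n ≤ l + 1 one has 2·Φ_k(n) + l ≤ Φ_k(n−1). -/
/-!
Consecutive values of `Φ` have ratio `α = 2 + 1/l`, so `Φ (n - 1) - 2 * Φ n = Φ n / l`, and the
inequality says exactly that `l ^ 2 ≤ Φ n`. Since `Φ n = l ^ 2 * α ^ (l + 1 - n)` with `1 ≤ α`, this
holds as long as the exponent `l + 1 - n` is nonnegative.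
-/

section LinearOrderedField

variable {K : Type*} [Field K] [LinearOrder K] [IsStrictOrderedRing K] {l : K}

lemma two_mul_add_le_div_mul_iff (hl : 0 < l) {y : K} :
    2 * y + l ≤ (2 * l + 1) / l * y ↔ l ^ 2 ≤ y := by
  have ratio_mul : (2 * l + 1) / l * y = 2 * y + y / l := by field_simp
  rw [ratio_mul, add_le_add_iff_left, le_div_iff₀ hl, sq]

lemma one_le_two_mul_add_one_div (hl : 0 < l) : 1 ≤ (2 * l + 1) / l := by
  rw [one_le_div hl]
  linarith

lemma le_zpow_neg_mul_mul_zpow {α c : K} (hα : 1 ≤ α) (hc : 0 ≤ c) {n N : ℤ} (hn : n ≤ N) :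
    c ≤ α ^ (-n) * (c * α ^ N) := by
  have hα₀ : α ≠ 0 := (zero_lt_one.trans_le hα).ne'
  calc
    c ≤ c * α ^ (-n + N) := le_mul_of_one_le_right hc (one_le_zpow₀ hα (by lia))
    _ = α ^ (-n) * (c * α ^ N) := by rw [zpow_add₀ hα₀, mul_left_comm]

theorem phi_inequality_general (hl : 0 < l) {α β : K} (hα : α = (2 * l + 1) / l) {N : ℤ}
    (hβ : β = l ^ 2 * α ^ N) {Φ : ℤ → K} (hΦ : ∀ n, Φ n = α ^ (-n) * β) {n : ℤ} (hn : n ≤ N) :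
    2 * Φ n + l ≤ Φ (n - 1) := by
  have one_le_α : 1 ≤ α := hα ▸ one_le_two_mul_add_one_div hl
  have sq_le : l ^ 2 ≤ Φ n := by
    rw [hΦ, hβ]
    exact le_zpow_neg_mul_mul_zpow one_le_α (sq_nonneg l) hn
  have Φ_pred : Φ (n - 1) = α * Φ n := by
    rw [hΦ, hΦ, neg_sub', sub_neg_eq_add, zpow_add_one₀ (by positivity), mul_right_comm, mul_comm]
  rw [Φ_pred, hα]
  exact (two_mul_add_le_div_mul_iff hl).2 sq_le

end LinearOrderedField

/-- Let `k ≥ 0`, `l = ⌊k/2⌋ + 1`, `α = (2l+1)/l`,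
`β = l²·α^(l+1)` and `Φ_k(n) = α^(−n)·β`.  Then for every `n` with
`1 ≤ n ≤ l + 1` one has `2·Φ_k(n) + l ≤ Φ_k(n−1)`. -/
theorem phi_inequality (k l : ℕ) (hl : l = k / 2 + 1) (α β : ℝ)
    (hα : α = (2 * (l : ℝ) + 1) / l) (hβ : β = (l : ℝ) ^ 2 * α ^ (l + 1))
    (Φ : ℕ → ℝ) (hΦ : ∀ m : ℕ, Φ m = α ^ (-(m : ℤ)) * β) :
    ∀ m : ℕ, 1 ≤ m → m ≤ l + 1 → 2 * Φ m + (l : ℝ) ≤ Φ (m - 1) := by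
  intro m one_le_m m_le
  rw [hΦ, hΦ, Nat.cast_pred one_le_m]
  exact phi_inequality_general (by rw [hl]; positivity) hα (N := (l + 1 : ℕ))
    (by rwa [zpow_natCast]) (fun _ ↦ rfl) (by exact_mod_cast m_le)
end

section
/- Let k ≥ 0, set l := ⌊k/2⌋ + 1, α := (2l+1)/l, β := l²·α^{l+1}, and define Φ_k : ℕ → ℝ≥0 by Φ_k(n) := α^{−n}·β. Let Γ ∈ 𝒢_k(g,n) and let Γ_W be its maximal Φ_k-weak subgraph. If k = 1 and P is a vertex of Γ of weight 0, or if k ≥ 2 and P is a vertex of Γ of weight at most k + 2, then P ∈ V(Γ_W). -/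
/-!
The one-vertex subgraph on `P` is itself `Φ`-weak. Its genus is the weight of `P` plus the number
of loops at `P`; as `Γ` is connected, all but `v(Γ) - 1` edges may be loops at `P`, but not more.
So, with at most `l` edges and `m = v(Γ) - 1`, the genus is at most `w P + (l - m)`,
while `Φ m = l² α · α^(l - m)` is at least `l² α + (l - m)` by Bernoulli's inequality. The weights
allowed for `P` satisfy `w P ≤ 2l + 1 ≤ l (2l + 1) = l² α`.
-/

namespace StableGraph

variable (Γ : StableGraph)

/-- The simple graph underlying `Γ`: loose half edges and loops are dropped and parallel edges are
merged. It is written exactly as in the field `conn`, which says that it is connected. -/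
def underlyingGraph : SimpleGraph Γ.V :=
  SimpleGraph.fromRel fun u v => ∃ x, Γ.ι x ≠ x ∧ Γ.a x = u ∧ Γ.a (Γ.ι x) = v

/-- The half edges of the whole edges that are not loops. Loose half edges are excluded by the
condition `Γ.a x ≠ Γ.a (Γ.ι x)` as well. -/
def nonLoopFinset : Finset Γ.H :=
  Finset.univ.filter fun x => Γ.a x ≠ Γ.a (Γ.ι x)

variable {Γ}

@[simp]
lemma mem_nonLoopFinset {x : Γ.H} : x ∈ Γ.nonLoopFinset ↔ Γ.a x ≠ Γ.a (Γ.ι x) := by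
  simp [nonLoopFinset]

lemma underlyingGraph_adj {u v : Γ.V} :
    Γ.underlyingGraph.Adj u v ↔ u ≠ v ∧ ∃ x, Γ.a x = u ∧ Γ.a (Γ.ι x) = v := by
  rw [underlyingGraph, SimpleGraph.fromRel_adj]
  refine and_congr_right fun huv => ⟨?_, ?_⟩
  · rintro (⟨x, -, hu, hv⟩ | ⟨x, -, hv, hu⟩)
    · exact ⟨x, hu, hv⟩
    · exact ⟨Γ.ι x, hu, by rwa [Γ.invol]⟩
  · rintro ⟨x, rfl, rfl⟩
    exact Or.inl ⟨x, fun hx => huv (congrArg Γ.a hx).symm, rfl, rfl⟩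

variable (Γ)

lemma card_dart_underlyingGraph_le [Fintype Γ.underlyingGraph.Dart] :
    Fintype.card Γ.underlyingGraph.Dart ≤ Γ.nonLoopFinset.card := by
  let toDart (x : Γ.nonLoopFinset) : Γ.underlyingGraph.Dart :=
    ⟨(Γ.a x, Γ.a (Γ.ι x)), underlyingGraph_adj.2 ⟨mem_nonLoopFinset.1 x.2, x, rfl, rfl⟩⟩
  have toDart_surjective : Function.Surjective toDart := by
    rintro ⟨⟨u, v⟩, huv⟩
    obtain ⟨hne, x, rfl, rfl⟩ := underlyingGraph_adj.1 huv
    exact ⟨⟨x, mem_nonLoopFinset.2 hne⟩, rfl⟩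
  exact (Fintype.card_le_of_surjective toDart toDart_surjective).trans_eq (Fintype.card_coe _)

lemma two_mul_card_le_card_nonLoopFinset_add_two :
    2 * Fintype.card Γ.V ≤ Γ.nonLoopFinset.card + 2 := by
  classical
  have h_conn : Γ.underlyingGraph.Connected := Γ.conn
  have h_tree := h_conn.card_vert_le_card_edgeSet_add_one
  rw [Nat.card_eq_fintype_card, Nat.card_eq_fintype_card, ← SimpleGraph.edgeFinset_card] at h_tree
  have h_dart := Γ.underlyingGraph.dart_card_eq_twice_card_edges
  have h_le := Γ.card_dart_underlyingGraph_le
  omega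

lemma card_edgeFinset_singleton_add_card_nonLoopFinset_le (P : Γ.V) :
    (Γ.edgeFinset {P}).card + Γ.nonLoopFinset.card ≤ (Γ.edgeFinset Finset.univ).card := by
  have h_disj : Disjoint (Γ.edgeFinset {P}) Γ.nonLoopFinset := by
    simp +contextual [Finset.disjoint_left, edgeFinset]
  rw [← Finset.card_union_of_disjoint h_disj]
  refine Finset.card_le_card (Finset.union_subset (fun x hx => ?_) (fun x hx => ?_))
  · simp_all [edgeFinset]
  · simpa [edgeFinset] using
      fun h_loose : Γ.ι x = x => mem_nonLoopFinset.1 hx (congrArg Γ.a h_loose).symm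

lemma edgeCount_singleton_add_card_le (P : Γ.V) :
    Γ.edgeCount {P} + Fintype.card Γ.V ≤ Γ.edgeCount Finset.univ + 1 := by
  have h_loops := Γ.card_edgeFinset_singleton_add_card_nonLoopFinset_le P
  have h_nonLoops := Γ.two_mul_card_le_card_nonLoopFinset_add_two
  unfold edgeCount
  omega

lemma numComponents_singleton (P : Γ.V) : Γ.numComponents {P} = 1 := by
  have : Subsingleton {v // v ∈ ({P} : Finset Γ.V)} := ⟨by simp⟩
  have : Nonempty {v // v ∈ ({P} : Finset Γ.V)} := ⟨P, by simp⟩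
  exact Nat.card_eq_one_iff_unique.2 ⟨Quot.Subsingleton, inferInstance⟩

lemma subGenus_singleton (P : Γ.V) : Γ.subGenus {P} = Γ.edgeCount {P} + Γ.w P := by
  simp [subGenus, numComponents_singleton]

variable {Γ} in
lemma mem_weakCore_of_isWeak {Φ : ℕ → ℝ} {S : Finset Γ.V} {P : Γ.V} (hS : Γ.IsWeak Φ S)
    (hP : P ∈ S) : P ∈ Γ.weakCore Φ := by
  classical
  exact Finset.mem_filter.2 ⟨Finset.mem_univ P, S, hS, hP⟩

end StableGraph

lemma sq_mul_add_sub_le_zpow_neg_mul {α : ℝ} (hα : 2 ≤ α) {l m : ℕ} (hm : m ≤ l) :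
    (l : ℝ) ^ 2 * α + (l - m) ≤ α ^ (-(m : ℤ)) * ((l : ℝ) ^ 2 * α ^ (l + 1)) := by
  obtain ⟨t, rfl⟩ := Nat.exists_eq_add_of_le hm
  have h_bernoulli : 1 + (t : ℝ) ≤ α ^ t := by
    nlinarith [one_add_mul_sub_le_pow (show -1 ≤ α by linarith) t, t.cast_nonneg (α := ℝ)]
  have h_cube : (t : ℝ) ≤ ((m + t : ℕ) : ℝ) ^ 2 * t := by
    have : t ≤ (m + t) ^ 2 * t :=
      calc t ≤ t ^ 3 := Nat.le_self_pow (by decide) t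
        _ = t ^ 2 * t := pow_succ t 2
        _ ≤ (m + t) ^ 2 * t := by gcongr; omega
    exact_mod_cast this
  have h_scale : ((m + t : ℕ) : ℝ) ^ 2 * t ≤ ((m + t : ℕ) : ℝ) ^ 2 * t * α :=
    le_mul_of_one_le_right (by positivity) (by linarith)
  calc ((m + t : ℕ) : ℝ) ^ 2 * α + ((m + t : ℕ) - m)
      = ((m + t : ℕ) : ℝ) ^ 2 * α + t := by push_cast; ring
    _ ≤ ((m + t : ℕ) : ℝ) ^ 2 * α * (1 + t) := by linarith
    _ ≤ ((m + t : ℕ) : ℝ) ^ 2 * α * α ^ t := by gcongr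
    _ = α ^ (-(m : ℤ)) * (((m + t : ℕ) : ℝ) ^ 2 * α ^ (m + t + 1)) := by
      rw [zpow_neg, zpow_natCast]
      field_simp
      ring

theorem low_weight_vertex_in_weakCore_general (l : ℕ) (α : ℝ) (hα : 2 ≤ α) (Γ : StableGraph)
    (hΓ : Γ.edgeCount Finset.univ ≤ l) (P : Γ.V) (hP : (Γ.w P : ℝ) ≤ (l : ℝ) ^ 2 * α) :
    P ∈ Γ.weakCore fun m => α ^ (-(m : ℤ)) * ((l : ℝ) ^ 2 * α ^ (l + 1)) := by
  refine StableGraph.mem_weakCore_of_isWeak (S := {P}) ?_ (Finset.mem_singleton_self P)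
  obtain ⟨m, hm⟩ : ∃ m, Fintype.card Γ.V = m + 1 :=
    Nat.exists_eq_succ_of_ne_zero (Fintype.card_pos_iff.2 ⟨P⟩).ne'
  have h_loops : Γ.edgeCount {P} + m ≤ l := by
    have := Γ.edgeCount_singleton_add_card_le P
    omega
  have h_loops_real : (Γ.edgeCount {P} : ℝ) ≤ l - m :=
    le_sub_iff_add_le.2 (by exact_mod_cast h_loops)
  rw [StableGraph.IsWeak, Γ.subGenus_singleton, Finset.card_singleton, hm, Nat.add_sub_cancel]
  calc (((Γ.edgeCount {P} : ℤ) + Γ.w P : ℤ) : ℝ) = Γ.w P + Γ.edgeCount {P} := by push_cast; ring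
    _ ≤ (l : ℝ) ^ 2 * α + (l - m) := add_le_add hP h_loops_real
    _ ≤ α ^ (-(m : ℤ)) * ((l : ℝ) ^ 2 * α ^ (l + 1)) :=
      sq_mul_add_sub_le_zpow_neg_mul hα (by omega)

open StableGraph in
/-- Let `k ≥ 0`, `l = ⌊k/2⌋ + 1`, `α = (2l+1)/l`,
`β = l²·α^(l+1)`, `Φ_k(n) = α^(−n)·β`, and let `Γ ∈ 𝒢_k(g,n)` with maximal
`Φ_k`-weak subgraph `Γ_W`.  If `k = 1` and `P` is a vertex of weight `0`, or
`k ≥ 2` and `P` is a vertex of weight at most `k + 2`, then `P ∈ V(Γ_W)`. -/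
theorem low_weight_vertex_in_weakCore (k g n l : ℕ) (hl : l = k / 2 + 1)
    (α β : ℝ) (hα : α = (2 * (l : ℝ) + 1) / l) (hβ : β = (l : ℝ) ^ 2 * α ^ (l + 1))
    (Φ : ℕ → ℝ) (hΦ : ∀ m : ℕ, Φ m = α ^ (-(m : ℤ)) * β)
    (Γ : StableGraph) (hΓ : Γ.memG k g n) (P : Γ.V)
    (hP : (k = 1 ∧ Γ.w P = 0) ∨ (2 ≤ k ∧ Γ.w P ≤ k + 2)) :
    P ∈ Γ.weakCore Φ := by
  obtain rfl : Φ = fun m : ℕ => α ^ (-(m : ℤ)) * β := funext hΦ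
  have hl_pos : (1 : ℝ) ≤ l := by exact_mod_cast (show 1 ≤ l by omega)
  have hα_two : 2 ≤ α := by
    rw [hα, le_div_iff₀ (by linarith)]
    linarith
  have h_weight : (Γ.w P : ℝ) ≤ (l : ℝ) ^ 2 * α :=
    calc (Γ.w P : ℝ) ≤ 2 * l + 1 := by exact_mod_cast (show Γ.w P ≤ 2 * l + 1 by omega)
      _ ≤ l * (2 * l + 1) := le_mul_of_one_le_left (by positivity) hl_pos
      _ = (l : ℝ) ^ 2 * α := by rw [hα]; field_simp
  rw [hβ]
  exact low_weight_vertex_in_weakCore_general l α hα_two Γ (hl ▸ hΓ.2.2) P h_weight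
end

section
/- For every integer l ≥ 1 and every integer n with 0 ≤ n ≤ l + 1 one has ((2l+3)/(l+1))^{l+1−n}·(l+1)² ≥ ((2l+1)/l)^{l−n}·l² (where for n = l + 1 the exponent l − n = −1 is interpreted as a negative power of the positive rational (2l+1)/l). -/
/-!
The function `x ↦ (1 + a/x)^x` is increasing, by Bernoulli's inequality with exponent `y/x`. For
`c ≥ 1` so is `(c + a/x)^x = c^x (1 + (a/c)/x)^x`, and `c = 2`, `a = 1` gives the inequality for
`n = 0`, even without the factors `l²` and `(l+1)²`. Passing from `n = 0` to `n ≥ 0` divides the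
two sides by `(2 + 1/l)^n` and `(2 + 1/(l+1))^n`, and the smaller side has the larger divisor.
-/

lemma one_add_div_rpow_self_le {a x y : ℝ} (hx : 0 < x) (hxy : x ≤ y) (ha : -x ≤ a) :
    (1 + a / x) ^ x ≤ (1 + a / y) ^ y := by
  have hy : 0 < y := hx.trans_le hxy
  have hax : -1 ≤ a / x := by rw [le_div_iff₀ hx]; linarith
  have hay : -1 ≤ a / y := by rw [le_div_iff₀ hy]; linarith
  have bernoulli : 1 + a / x ≤ (1 + a / y) ^ (y / x) := by
    calc 1 + a / x = 1 + y / x * (a / y) := by field_simp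
      _ ≤ (1 + a / y) ^ (y / x) := one_add_mul_self_le_rpow_one_add hay ((one_le_div hx).2 hxy)
  calc (1 + a / x) ^ x ≤ ((1 + a / y) ^ (y / x)) ^ x :=
        Real.rpow_le_rpow (by linarith) bernoulli hx.le
    _ = (1 + a / y) ^ y := by rw [← Real.rpow_mul (by linarith), div_mul_cancel₀ y hx.ne']

lemma add_div_rpow_self_le {c a x y : ℝ} (hc : 1 ≤ c) (hx : 0 < x) (hxy : x ≤ y)
    (ha : -(c * x) ≤ a) : (c + a / x) ^ x ≤ (c + a / y) ^ y := by
  have hc₀ : 0 < c := zero_lt_one.trans_le hc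
  have hac : -x ≤ a / c := by rw [le_div_iff₀ hc₀]; linarith
  have base_nonneg {z : ℝ} (hxz : x ≤ z) : 0 ≤ 1 + a / c / z := by
    have : -1 ≤ a / c / z := by rw [le_div_iff₀ (hx.trans_le hxz)]; linarith
    linarith
  have factor {z : ℝ} (hxz : x ≤ z) : (c + a / z) ^ z = c ^ z * (1 + a / c / z) ^ z := by
    rw [← Real.mul_rpow hc₀.le (base_nonneg hxz)]
    field_simp
  rw [factor le_rfl, factor hxy]
  exact mul_le_mul (Real.rpow_le_rpow_of_exponent_le hc hxy)
    (one_add_div_rpow_self_le hx hxy hac) (Real.rpow_nonneg (base_nonneg le_rfl) x)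
    (Real.rpow_nonneg hc₀.le y)

theorem alpha_beta_monotone_general {x t : ℝ} (hx : 0 < x) (ht : 0 ≤ t) :
    ((2 * x + 3) / (x + 1)) ^ (x + 1 - t) * (x + 1) ^ 2 ≥
      ((2 * x + 1) / x) ^ (x - t) * x ^ 2 := by
  have hα : (2 * x + 1) / x = 2 + 1 / x := by field_simp
  have hα_succ : (2 * x + 3) / (x + 1) = 2 + 1 / (x + 1) := by field_simp; ring
  have hx_le : x ≤ x + 1 := by linarith
  have hpow : (2 + 1 / x) ^ x ≤ (2 + 1 / (x + 1)) ^ (x + 1) :=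
    add_div_rpow_self_le one_le_two hx hx_le (by linarith)
  have hdivisor : (2 + 1 / (x + 1)) ^ t ≤ (2 + 1 / x) ^ t := by gcongr
  rw [hα, hα_succ, Real.rpow_sub (by positivity), Real.rpow_sub (by positivity), ge_iff_le]
  gcongr ?_ / ?_ * ?_ ^ 2

/-- For every integer `l ≥ 1` and every integer `n` with
`0 ≤ n ≤ l + 1`, one has
`((2l+3)/(l+1))^(l+1−n)·(l+1)² ≥ ((2l+1)/l)^(l−n)·l²`, the powers being
integer powers (for `n = l + 1` the exponent `l − n = −1`). -/
theorem alpha_beta_monotone (l : ℕ) (hl : 1 ≤ l) :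
    ∀ n : ℕ, n ≤ l + 1 →
      ((2 * (l : ℝ) + 3) / ((l : ℝ) + 1)) ^ ((l : ℤ) + 1 - (n : ℤ)) * ((l : ℝ) + 1) ^ 2 ≥
        ((2 * (l : ℝ) + 1) / (l : ℝ)) ^ ((l : ℤ) - (n : ℤ)) * (l : ℝ) ^ 2 := by
  intro n _
  exact_mod_cast alpha_beta_monotone_general (Nat.cast_pos.2 hl) n.cast_nonneg
end

section
/- Let k ≥ 0, and for any m ≥ 0 set l_m := ⌊m/2⌋ + 1, α_m := (2l_m+1)/l_m, β_m := l_m²·α_m^{l_m+1}, and Φ_m(n) := α_m^{−n}·β_m. Let Γ ∈ 𝒢_k(g,n); since a graph with at most ⌊k/2⌋+1 whole edges has at most ⌊(k+1)/2⌋+1 whole edges, Γ may be regarded as an element i(Γ) of 𝒢_{k+1}(g,n). Then every Φ_k-weak full subgraph of Γ is Φ_{k+1}-weak; in particular, the maximal Φ_k-weak subgraph Γ_W of Γ is contained in the maximal Φ_{k+1}-weak subgraph of i(Γ), i.e. i(Γ_W) ⊆ (i(Γ))_W. -/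
/-!
For every fixed `n` the bound `Φ_l(n) = α_l^(-n) β_l` is increasing in `l`, so a weak subgraph stays
weak when `l` grows. Indeed `α_l = 2 + 1/l` is decreasing, hence `α_l^(-n)` is increasing, and
pulling one factor `α_l` out of the power gives `β_l = l (2l + 1) 2^l (1 + (1/2)/l)^l`, whose last
factor is increasing by the classical monotonicity of `(1 + t/x)^x`, a form of Bernoulli's
inequality.
-/

theorem one_add_div_rpow_le_one_add_div_rpow {t x y : ℝ} (hx : 0 < x) (hxy : x ≤ y)
    (ht : -x ≤ t) : (1 + t / x) ^ x ≤ (1 + t / y) ^ y := by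
  have hy : 0 < y := hx.trans_le hxy
  have hbase_x : 0 ≤ 1 + t / x := by
    have : -1 ≤ t / x := by rw [le_div_iff₀ hx]; linarith
    linarith
  have hty : -1 ≤ t / y := by rw [le_div_iff₀ hy]; linarith
  have bernoulli : 1 + t / x ≤ (1 + t / y) ^ (y / x) :=
    calc 1 + t / x = 1 + y / x * (t / y) := by field_simp
      _ ≤ (1 + t / y) ^ (y / x) :=
        one_add_mul_self_le_rpow_one_add hty ((one_le_div₀ hx).2 hxy)
  calc (1 + t / x) ^ x ≤ ((1 + t / y) ^ (y / x)) ^ x := Real.rpow_le_rpow hbase_x bernoulli hx.le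
    _ = (1 + t / y) ^ y := by
      rw [← Real.rpow_mul (by linarith), div_mul_cancel₀ y hx.ne']

namespace StableGraph

/-- The base `α_m` of the bound `Φ_m`, as a function of `l = l_m = ⌊m/2⌋ + 1`; only `l ≠ 0` is
meaningful. -/
noncomputable def weakBase (l : ℕ) : ℝ := (2 * (l : ℝ) + 1) / l

/-- The coefficient `β_m` of the bound `Φ_m`, as a function of `l = l_m`. -/
noncomputable def weakCoeff (l : ℕ) : ℝ := (l : ℝ) ^ 2 * weakBase l ^ (l + 1)

/-- The bound `Φ_m` on the genus of weak subgraphs, as a function of `l = l_m` and of the number `n`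
of vertices outside the subgraph. -/
noncomputable def weakBound (l n : ℕ) : ℝ := weakBase l ^ (-(n : ℤ)) * weakCoeff l

section Bounds

variable {l l' : ℕ}

theorem weakBase_eq_two_mul (hl : l ≠ 0) : weakBase l = 2 * (1 + 1 / 2 / (l : ℝ)) := by
  rw [weakBase]
  field_simp

theorem weakBase_pos (hl : l ≠ 0) : 0 < weakBase l := by
  rw [weakBase]
  positivity

theorem weakBase_anti (hl : l ≠ 0) (h : l ≤ l') : weakBase l' ≤ weakBase l := by
  rw [weakBase_eq_two_mul hl, weakBase_eq_two_mul (by lia)]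
  gcongr

theorem weakCoeff_eq (hl : l ≠ 0) :
    weakCoeff l = l * (2 * l + 1) * (2 ^ l * (1 + 1 / 2 / (l : ℝ)) ^ l) := by
  have base_mul : l * weakBase l = 2 * l + 1 := by
    rw [weakBase]
    field_simp
  calc weakCoeff l = l * (l * weakBase l) * weakBase l ^ l := by rw [weakCoeff]; ring
    _ = l * (2 * l + 1) * (2 ^ l * (1 + 1 / 2 / (l : ℝ)) ^ l) := by
      rw [base_mul, weakBase_eq_two_mul hl, mul_pow]

theorem weakCoeff_mono (hl : l ≠ 0) (h : l ≤ l') : weakCoeff l ≤ weakCoeff l' := by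
  have pow_le : (1 + 1 / 2 / (l : ℝ)) ^ l ≤ (1 + 1 / 2 / (l' : ℝ)) ^ l' := by
    have hl_pos : (0 : ℝ) < l := by positivity
    exact_mod_cast one_add_div_rpow_le_one_add_div_rpow (t := 1 / 2) hl_pos
      (Nat.cast_le.2 h) (by linarith)
  rw [weakCoeff_eq hl, weakCoeff_eq (by lia)]
  gcongr
  norm_num

theorem weakBound_mono (hl : l ≠ 0) (h : l ≤ l') : weakBound l ≤ weakBound l' := by
  intro n
  have hbase : 0 < weakBase l' := weakBase_pos (by lia)
  have hcoeff : 0 ≤ weakCoeff l := by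
    rw [weakCoeff_eq hl]
    positivity
  have inv_pow_le : weakBase l ^ (-(n : ℤ)) ≤ weakBase l' ^ (-(n : ℤ)) := by
    simp only [zpow_neg, zpow_natCast]
    gcongr
    exact weakBase_anti hl h
  exact mul_le_mul inv_pow_le (weakCoeff_mono hl h) hcoeff (by positivity)

end Bounds

section Weak

variable {Γ : StableGraph} {Φ Ψ : ℕ → ℝ}

theorem memG.mono {k k' g n : ℕ} (hk : k ≤ k') (hΓ : Γ.memG k g n) : Γ.memG k' g n :=
  ⟨hΓ.1, hΓ.2.1, hΓ.2.2.trans (by gcongr)⟩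

theorem IsWeak.mono {S : Finset Γ.V} (h : Φ ≤ Ψ) (hS : Γ.IsWeak Φ S) : Γ.IsWeak Ψ S :=
  hS.trans (h _)

theorem weakCore_mono (h : Φ ≤ Ψ) : Γ.weakCore Φ ⊆ Γ.weakCore Ψ := by
  classical
  exact Finset.monotone_filter_right _ fun _ _ ⟨S, hS, hv⟩ => ⟨S, hS.mono h, hv⟩

end Weak

end StableGraph

open StableGraph in
theorem weak_mono_in_k_general {k k' g n : ℕ} (hk : k ≤ k') (Γ : StableGraph) :
    (Γ.memG k g n → Γ.memG k' g n) ∧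
    (∀ S : Finset Γ.V,
      Γ.IsWeak (weakBound (k / 2 + 1)) S → Γ.IsWeak (weakBound (k' / 2 + 1)) S) ∧
    Γ.weakCore (weakBound (k / 2 + 1)) ⊆ Γ.weakCore (weakBound (k' / 2 + 1)) := by
  have bound_le : weakBound (k / 2 + 1) ≤ weakBound (k' / 2 + 1) :=
    weakBound_mono (Nat.succ_ne_zero _) (by gcongr)
  exact ⟨memG.mono hk, fun _ => IsWeak.mono bound_le, weakCore_mono bound_le⟩

open StableGraph in
/-- For `m ≥ 0` set `l_m = ⌊m/2⌋ + 1`, `α_m = (2l_m+1)/l_m`,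
`β_m = l_m²·α_m^(l_m+1)` and `Φ_m(n) = α_m^(−n)·β_m`.  Let `Γ ∈ 𝒢_k(g,n)`
(so that `Γ`, having at most `⌊k/2⌋+1 ≤ ⌊(k+1)/2⌋+1` whole edges, may also be
regarded as an element `i(Γ)` of `𝒢_{k+1}(g,n)`).  Then every `Φ_k`-weak full
subgraph of `Γ` is `Φ_{k+1}`-weak; in particular the maximal `Φ_k`-weak
subgraph of `Γ` is contained in the maximal `Φ_{k+1}`-weak subgraph:
`i(Γ_W) ⊆ (i(Γ))_W`. -/
theorem weak_mono_in_k (k g n lk lk1 : ℕ)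
    (hlk : lk = k / 2 + 1) (hlk1 : lk1 = (k + 1) / 2 + 1)
    (αk βk αk1 βk1 : ℝ)
    (hαk : αk = (2 * (lk : ℝ) + 1) / lk) (hβk : βk = (lk : ℝ) ^ 2 * αk ^ (lk + 1))
    (hαk1 : αk1 = (2 * (lk1 : ℝ) + 1) / lk1)
    (hβk1 : βk1 = (lk1 : ℝ) ^ 2 * αk1 ^ (lk1 + 1))
    (Φk Φk1 : ℕ → ℝ)
    (hΦk : ∀ m : ℕ, Φk m = αk ^ (-(m : ℤ)) * βk)
    (hΦk1 : ∀ m : ℕ, Φk1 m = αk1 ^ (-(m : ℤ)) * βk1)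
    (Γ : StableGraph) (hΓ : Γ.memG k g n) :
    Γ.memG (k + 1) g n ∧
    (∀ S : Finset Γ.V, Γ.IsWeak Φk S → Γ.IsWeak Φk1 S) ∧
    Γ.weakCore Φk ⊆ Γ.weakCore Φk1 := by
  subst hlk hlk1 hαk hβk hαk1 hβk1
  obtain ⟨rfl, rfl⟩ : Φk = weakBound (k / 2 + 1) ∧ Φk1 = weakBound ((k + 1) / 2 + 1) :=
    ⟨funext hΦk, funext hΦk1⟩
  exact (weak_mono_in_k_general k.le_succ Γ).imp_left (· hΓ)
end
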